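/- arXiv:2005.01374 — 9 statements merged into one kernel-verified Lean document; each statement's English description precedes it below -/
import Mathlib

section
/- A deterministic visibly push-down automaton M has a synchronizing word in the empty stack model if and only if for every pair of states p, q ∈ Q there exist a word w ∈ Σ* and a state r ∈ Q such that (p, ⊥) →^w (r, ⊥) and (q, ⊥) →^w (r, ⊥). -/
/-- Letters of a visibly pushdown alphabet: call letters (pushing one stack symbol),
internal letters (leaving the stack unchanged), and return letters (popping). -/
inductive VLetter (C I R : Type) : Type
  | call : C → VLetter C I R
  | int  : I → VLetter C I R
  | ret  : R → VLetter C I R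

/-- A deterministic visibly push-down automaton over state type `Q`, call letters `C`,
internal letters `I`, return letters `R`, and stack alphabet `Γ` (the symbols other than the
bottom symbol `⊥`).  A stack is a `List Γ` of the symbols above `⊥`, top at the head; the
bottom symbol `⊥` is implicit.  A return transition receives `none` when `⊥` is the topmost
symbol (it is read but not popped), and `some γ` when `γ ∈ Γ` is on top (which is popped). -/
structure DVPDA (Q C I R Γ : Type) : Type where
  δc : Q → C → Q × Γ
  δi : Q → I → Q
  δr : Q → R → Option Γ → Q

namespace DVPDA

variable {Q C I R Γ : Type}

/-- One step of a DVPDA on a configuration `(q, υ)`. -/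
def step (M : DVPDA Q C I R Γ) : Q × List Γ → VLetter C I R → Q × List Γ
  | (q, s), .call c => ((M.δc q c).1, (M.δc q c).2 :: s)
  | (q, s), .int i  => (M.δi q i, s)
  | (q, []), .ret ρ => (M.δr q ρ none, [])
  | (q, γ :: s), .ret ρ => (M.δr q ρ (some γ), s)

/-- The run of a DVPDA on a word: `(q, υ) →^w M.run (q, υ) w`. -/
def run (M : DVPDA Q C I R Γ) (cfg : Q × List Γ) (w : List (VLetter C I R)) : Q × List Γ :=
  w.foldl M.step cfg

/-- `w` synchronizes `M` in the empty stack model: all runs from `(q, ⊥)` end in the same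
state with empty stack. -/
def SyncEmpty (M : DVPDA Q C I R Γ) (w : List (VLetter C I R)) : Prop :=
  ∃ qbar : Q, ∀ q : Q, M.run (q, []) w = (qbar, [])

/-- `w` synchronizes `M` in the same stack model: all runs from `(q, ⊥)` end in the same
state with the same stack content. -/
def SyncSame (M : DVPDA Q C I R Γ) (w : List (VLetter C I R)) : Prop :=
  ∃ (qbar : Q) (υ : List Γ), ∀ q : Q, M.run (q, []) w = (qbar, υ)

/-- `w` synchronizes `M` in the arbitrary stack model: all runs from `(q, ⊥)` end in the same
state, with arbitrary stack contents. -/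
def SyncArb (M : DVPDA Q C I R Γ) (w : List (VLetter C I R)) : Prop :=
  ∃ qbar : Q, ∀ q : Q, (M.run (q, []) w).1 = qbar

end DVPDA

/-!
How a letter changes the stack height depends only on the letter and the height, so runs of the
same word from configurations of equal stack height stay at equal height. A word that leads a single
`(p, ⊥)` to an empty stack therefore leads every `(q, ⊥)` to an empty stack, and acts on `Q` as a
transformation. These transformations form a monoid, and a monoid action that can merge any two
points can merge any finite set of points, one point at a time, as for finite automata.
-/

theorem exists_forall_mem_smul_eq_of_pairwise {N α : Type*} [Monoid N] [MulAction N α]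
    [Nonempty α] (hpair : ∀ a b : α, ∃ n : N, n • a = n • b) {s : Set α} (hs : s.Finite) :
    ∃ (n : N) (c : α), ∀ a ∈ s, n • a = c := by
  induction s, hs using Set.Finite.induction_on with
  | empty => exact ⟨1, Classical.arbitrary α, fun a ha => ha.elim⟩
  | @insert a s _ _ ih =>
    obtain ⟨m, c, hm⟩ := ih
    obtain ⟨n, hn⟩ := hpair (m • a) c
    refine ⟨n * m, n • c, Set.forall_mem_insert.mpr ⟨?_, fun b hb => ?_⟩⟩
    · rw [mul_smul, hn]
    · rw [mul_smul, hm b hb]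

namespace DVPDA

variable {Q C I R Γ : Type} (M : DVPDA Q C I R Γ)

theorem run_append (x : Q × List Γ) (v w : List (VLetter C I R)) :
    M.run x (v ++ w) = M.run (M.run x v) w :=
  List.foldl_append

theorem length_step_congr {x y : Q × List Γ} (h : x.2.length = y.2.length)
    (l : VLetter C I R) : (M.step x l).2.length = (M.step y l).2.length := by
  obtain ⟨p, s⟩ := x
  obtain ⟨q, t⟩ := y
  cases l <;> cases s <;> cases t <;> simp_all [step]

theorem length_run_congr {x y : Q × List Γ} (h : x.2.length = y.2.length)
    (w : List (VLetter C I R)) : (M.run x w).2.length = (M.run y w).2.length := by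
  induction w generalizing x y with
  | nil => exact h
  | cons l _ ih => exact ih (M.length_step_congr h l)

/-- The transformation monoid of `M` on the empty stack: the maps `f : Q → Q` such that some word
leads `(q, ⊥)` to `(f q, ⊥)` for every state `q`. Since `Function.End` multiplies by composition,
concatenating words multiplies their transformations in the opposite order. -/
def emptyStackMonoid : Submonoid (Function.End Q) where
  carrier := {f | ∃ w, ∀ q, M.run (q, []) w = (f q, [])}
  one_mem' := ⟨[], fun _ => rfl⟩
  mul_mem' := by
    rintro f g ⟨v, hv⟩ ⟨w, hw⟩
    refine ⟨w ++ v, fun q => ?_⟩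
    rw [run_append, hw, hv]
    rfl

variable {M}

theorem mem_emptyStackMonoid {f : Function.End Q} :
    f ∈ M.emptyStackMonoid ↔ ∃ w, ∀ q, M.run (q, []) w = (f q, []) :=
  Iff.rfl

theorem run_snd_eq_nil_of_run_snd_eq_nil {w : List (VLetter C I R)} {p : Q}
    (h : (M.run (p, []) w).2 = []) (q : Q) : (M.run (q, []) w).2 = [] := by
  have hlen : (M.run (q, []) w).2.length = (M.run (p, []) w).2.length :=
    M.length_run_congr (x := (q, [])) (y := (p, [])) rfl w
  rwa [h, List.length_nil, List.length_eq_zero_iff] at hlen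

theorem run_fst_mem_emptyStackMonoid {w : List (VLetter C I R)} {p : Q}
    (h : (M.run (p, []) w).2 = []) : (fun q => (M.run (q, []) w).1) ∈ M.emptyStackMonoid :=
  mem_emptyStackMonoid.mpr ⟨w, fun q => Prod.ext rfl (run_snd_eq_nil_of_run_snd_eq_nil h q)⟩

theorem exists_emptyStackMonoid_smul_eq {w : List (VLetter C I R)} {p q r : Q}
    (hp : M.run (p, []) w = (r, [])) (hq : M.run (q, []) w = (r, [])) :
    ∃ f : M.emptyStackMonoid, f • p = f • q := by
  refine ⟨⟨_, run_fst_mem_emptyStackMonoid (congrArg Prod.snd hp)⟩, ?_⟩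
  change (M.run (p, []) w).1 = (M.run (q, []) w).1
  rw [hp, hq]

theorem exists_syncEmpty_of_emptyStackMonoid_smul_eq {f : M.emptyStackMonoid} {r : Q}
    (hf : ∀ q : Q, f • q = r) : ∃ w, M.SyncEmpty w := by
  obtain ⟨w, hw⟩ := mem_emptyStackMonoid.mp f.2
  exact ⟨w, r, fun q => (hw q).trans (congrArg (·, []) (hf q))⟩

end DVPDA


/-- A DVPDA `M` has a synchronizing word in the empty stack model iff
every pair of states `p, q` can be synchronized in the empty stack model, i.e. there are a
word `w` and a state `r` with `(p, ⊥) →^w (r, ⊥)` and `(q, ⊥) →^w (r, ⊥)`. -/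
theorem dvpda_syncEmpty_iff_pairwise
    {Q C I R Γ : Type} [Fintype Q] [Nonempty Q] (M : DVPDA Q C I R Γ) :
    (∃ w : List (VLetter C I R), M.SyncEmpty w) ↔
    (∀ p q : Q, ∃ (w : List (VLetter C I R)) (r : Q),
      M.run (p, []) w = (r, []) ∧ M.run (q, []) w = (r, [])) := by
  constructor
  · rintro ⟨w, r, hw⟩ p q
    exact ⟨w, r, hw p, hw q⟩
  · intro hpair
    have hmerge : ∀ p q : Q, ∃ f : M.emptyStackMonoid, f • p = f • q := fun p q =>
      let ⟨_, _, hp, hq⟩ := hpair p q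
      DVPDA.exists_emptyStackMonoid_smul_eq hp hq
    obtain ⟨f, r, hf⟩ := exists_forall_mem_smul_eq_of_pairwise hmerge Set.finite_univ
    exact DVPDA.exists_syncEmpty_of_emptyStackMonoid_smul_eq fun q => hf q (Set.mem_univ q)
end

section
/- For every deterministic visibly push-down automaton M with Σ_ret = ∅: M has a synchronizing word in the empty stack model if and only if the DFA A = (Q, Σ_int, δ_i) obtained by restricting M to its internal letters has a synchronizing word. -/
namespace DVPDA

variable {Q C I R Γ : Type} (M : DVPDA Q C I R Γ)

theorem run_map_int (q : Q) (s : List Γ) (v : List I) :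
    M.run (q, s) (v.map .int) = (v.foldl M.δi q, s) := by
  induction v generalizing q with
  | nil => rfl
  | cons i _ ih => exact ih (M.δi q i)

theorem syncEmpty_map_int_iff (v : List I) :
    M.SyncEmpty (v.map .int) ↔ ∃ qbar : Q, ∀ q : Q, v.foldl M.δi q = qbar := by
  simp only [SyncEmpty, run_map_int, Prod.mk.injEq, and_true]

theorem suffix_run_snd_of_forall_ret_notMem {w : List (VLetter C I R)}
    (hw : ∀ ρ, .ret ρ ∉ w) (q : Q) (s : List Γ) : s <:+ (M.run (q, s) w).2 := by
  induction w generalizing q s with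
  | nil => exact List.suffix_rfl
  | cons a w ih =>
    have hw_tail : ∀ ρ, .ret ρ ∉ w := fun ρ hρ => hw ρ (List.mem_cons_of_mem a hρ)
    cases a with
    | call c => exact (List.suffix_cons _ s).trans (ih hw_tail (M.δc q c).1 ((M.δc q c).2 :: s))
    | int i => exact ih hw_tail (M.δi q i) s
    | ret ρ => exact absurd List.mem_cons_self (hw ρ)

theorem exists_eq_map_int_of_run_snd_eq {w : List (VLetter C I R)}
    (hw : ∀ ρ, .ret ρ ∉ w) {q : Q} {s : List Γ} (hs : (M.run (q, s) w).2 = s) :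
    ∃ v : List I, w = v.map .int := by
  induction w generalizing q with
  | nil => exact ⟨[], rfl⟩
  | cons a w ih =>
    have hw_tail : ∀ ρ, .ret ρ ∉ w := fun ρ hρ => hw ρ (List.mem_cons_of_mem a hρ)
    cases a with
    | call c =>
      have pushed_suffix : (M.δc q c).2 :: s <:+ (M.run (q, s) (.call c :: w)).2 :=
        M.suffix_run_snd_of_forall_ret_notMem hw_tail _ _
      rw [hs] at pushed_suffix
      exact absurd pushed_suffix.length_le (Nat.not_succ_le_self s.length)
    | int i =>
      obtain ⟨v, rfl⟩ := ih hw_tail (q := M.δi q i) hs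
      exact ⟨i :: v, rfl⟩
    | ret ρ => exact absurd List.mem_cons_self (hw ρ)

variable {M} in
theorem SyncEmpty.exists_eq_map_int {w : List (VLetter C I R)} (h : M.SyncEmpty w)
    (hw : ∀ ρ, .ret ρ ∉ w) : ∃ v : List I, w = v.map .int := by
  obtain ⟨qbar, hrun⟩ := h
  have stack_empty : (M.run (qbar, []) w).2 = [] := congrArg Prod.snd (hrun qbar)
  exact M.exists_eq_map_int_of_run_snd_eq hw stack_empty

end DVPDA

theorem dvpda_no_ret_syncEmpty_iff_internal_dfa_sync_general
    {Q C I R Γ : Type} [IsEmpty R] (M : DVPDA Q C I R Γ) :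
    (∃ w : List (VLetter C I R), M.SyncEmpty w) ↔
    (∃ (w : List I) (qbar : Q), ∀ q : Q, w.foldl M.δi q = qbar) := by
  constructor
  · rintro ⟨w, hw⟩
    obtain ⟨v, rfl⟩ := hw.exists_eq_map_int isEmptyElim
    exact ⟨v, (M.syncEmpty_map_int_iff v).mp hw⟩
  · rintro ⟨v, hv⟩
    exact ⟨v.map .int, (M.syncEmpty_map_int_iff v).mpr hv⟩

/-- For every DVPDA `M` with `Σ_ret = ∅`: `M` has a synchronizing word in
the empty stack model iff the DFA `A = (Q, Σ_int, δ_i)` obtained by restricting `M` to its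
internal letters has a synchronizing word. -/
theorem dvpda_no_ret_syncEmpty_iff_internal_dfa_sync
    {Q C I Γ : Type} [Fintype Q] (M : DVPDA Q C I Empty Γ) :
    (∃ w : List (VLetter C I Empty), M.SyncEmpty w) ↔
    (∃ (w : List I) (qbar : Q), ∀ q : Q, w.foldl M.δi q = qbar) :=
  dvpda_no_ret_syncEmpty_iff_internal_dfa_sync_general M
end

section
/- Let A = (Q, Σ, δ) be a DFA, S ⊆ Q, and t ∈ S a fixed state, and let M be the DVPDA constructed from A, S, and t as described in the context. Then M has a synchronizing word in the arbitrary stack model if and only if there exists a word w ∈ Σ* that synchronizes the subset S in A, i.e., with |δ(S, w)| = 1. -/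
/-- The DVPDA constructed from a DFA `A = (Q, Σ, δ)`, a subset `S ⊆ Q`, and a fixed state
`t ∈ S` in the reduction from `DFA-Sync-From-Subset` to `Sync-DVPDA-Arb`: states `Q`, call
letters `Σ`, no internal letters, one return letter `r`, stack alphabet `Q ∪ {⊥}`.  A call
letter `σ` maps `q` to `δ(q, σ)` pushing `q`; the return letter `r` on bottom symbol `⊥`
fixes states of `S` and maps states outside `S` to `t`, and on a stack symbol `p ∈ Q` it
pops and moves to `p`. -/
def fromSubsetDVPDA {Q A : Type} (δ : Q → A → Q) (S : Set Q) [DecidablePred (· ∈ S)]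
    (t : Q) : DVPDA Q A Empty Unit Q where
  δc := fun q σ => (δ q σ, q)
  δi := fun _ e => e.elim
  δr := fun q _ g => match g with
    | none => if q ∈ S then q else t
    | some p => p

/-!
In a run of `M` started in `(q, ⊥)` with `q ∈ S`, the return letter undoes the last pending call,
and does nothing when no call is pending. Hence a word acts on `S` exactly as its pending calls do,
and the pending calls of a synchronizing word of `M` synchronize `S` in `A`. Conversely, `r` maps
`Q` into `S` when read on `⊥`, so prefixing a word that synchronizes `S` with `r` synchronizes `M`.
-/

theorem image_eq_singleton_iff_of_nonempty {α β : Type*} {f : α → β} {s : Set α} {b : β}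
    (hs : s.Nonempty) : f '' s = {b} ↔ ∀ a ∈ s, f a = b :=
  (hs.image f).subset_singleton_iff.symm.trans Set.image_subset_iff

namespace VLetter

variable {C I R : Type}

/-- The letters of the calls of a word that no later return letter matches, in reading order: the
word over the call alphabet to which a word reduces when every return undoes the call it matches.
Return letters read while no call is pending are ignored, as `dropLast` fixes the empty list. -/
def pendingCalls (w : List (VLetter C I R)) : List C :=
  w.foldl (fun u l => match l with
    | .call c => u ++ [c]
    | .int _ => u
    | .ret _ => u.dropLast) []

theorem pendingCalls_append_call (w : List (VLetter C I R)) (c : C) :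
    pendingCalls (w ++ [.call c]) = pendingCalls w ++ [c] :=
  List.foldl_append

theorem pendingCalls_append_int (w : List (VLetter C I R)) (i : I) :
    pendingCalls (w ++ [.int i]) = pendingCalls w :=
  List.foldl_append

theorem pendingCalls_append_ret (w : List (VLetter C I R)) (ρ : R) :
    pendingCalls (w ++ [.ret ρ]) = (pendingCalls w).dropLast :=
  List.foldl_append

end VLetter

namespace DVPDA

variable {Q C I R Γ : Type} (M : DVPDA Q C I R Γ)

theorem run_append_singleton (cfg : Q × List Γ) (w : List (VLetter C I R)) (l : VLetter C I R) :
    M.run cfg (w ++ [l]) = M.step (M.run cfg w) l :=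
  List.foldl_append

theorem run_map_call_append_singleton (cfg : Q × List Γ) (u : List C) (c : C) :
    M.run cfg ((u ++ [c]).map .call) = M.step (M.run cfg (u.map .call)) (.call c) := by
  rw [List.map_append, List.map_singleton, run_append_singleton]

theorem run_map_call_fst (w : List C) (cfg : Q × List Γ) :
    (M.run cfg (w.map .call)).1 = w.foldl (fun q c => (M.δc q c).1) cfg.1 := by
  induction w generalizing cfg with
  | nil => rfl
  | cons c _ ih => exact ih (M.step cfg (.call c))

theorem run_eq_run_map_call_pendingCalls
    (step_int : ∀ cfg i, M.step cfg (.int i) = cfg)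
    (step_call_ret : ∀ cfg c ρ, M.step (M.step cfg (.call c)) (.ret ρ) = cfg)
    {cfg : Q × List Γ} (step_ret : ∀ ρ, M.step cfg (.ret ρ) = cfg)
    (w : List (VLetter C I R)) :
    M.run cfg w = M.run cfg ((VLetter.pendingCalls w).map .call) := by
  induction w using List.reverseRecOn with
  | nil => rfl
  | append_singleton w l ih =>
    rw [run_append_singleton, ih]
    cases l with
    | call c => rw [VLetter.pendingCalls_append_call, run_map_call_append_singleton]
    | int i => rw [VLetter.pendingCalls_append_int, step_int]
    | ret ρ =>
      rw [VLetter.pendingCalls_append_ret]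
      rcases (VLetter.pendingCalls w).eq_nil_or_concat' with no_pending | ⟨u, c, last_pending⟩
      · rw [no_pending]
        exact step_ret ρ
      · rw [last_pending, List.dropLast_concat, run_map_call_append_singleton, step_call_ret]

end DVPDA

section FromSubset

variable {Q A : Type} (δ : Q → A → Q) {S : Set Q} [DecidablePred (· ∈ S)] (t : Q)

theorem fromSubsetDVPDA_run_map_call_fst (w : List A) (cfg : Q × List Q) :
    ((fromSubsetDVPDA δ S t).run cfg (w.map .call)).1 = w.foldl δ cfg.1 :=
  DVPDA.run_map_call_fst _ w cfg

theorem fromSubsetDVPDA_step_ret_of_mem {q : Q} (hq : q ∈ S) (ρ : Unit) :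
    (fromSubsetDVPDA δ S t).step (q, []) (.ret ρ) = (q, []) :=
  congrArg (·, []) (if_pos hq)

theorem fromSubsetDVPDA_δr_none_mem {t : Q} (ht : t ∈ S) (q : Q) (ρ : Unit) :
    (fromSubsetDVPDA δ S t).δr q ρ none ∈ S := by
  change (if q ∈ S then q else t) ∈ S
  split_ifs with hq
  · exact hq
  · exact ht

theorem fromSubsetDVPDA_run_fst_of_mem {q : Q} (hq : q ∈ S) (w : List (VLetter A Empty Unit)) :
    ((fromSubsetDVPDA δ S t).run (q, []) w).1 = (VLetter.pendingCalls w).foldl δ q := by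
  rw [DVPDA.run_eq_run_map_call_pendingCalls _ (fun _ i => i.elim) (fun _ _ _ => rfl)
    (fromSubsetDVPDA_step_ret_of_mem δ t hq), fromSubsetDVPDA_run_map_call_fst]

end FromSubset

theorem fromSubsetDVPDA_syncArb_iff_general
    {Q A : Type} (δ : Q → A → Q) (S : Set Q) [DecidablePred (· ∈ S)] (t : Q) (ht : t ∈ S) :
    (∃ w : List (VLetter A Empty Unit), (fromSubsetDVPDA δ S t).SyncArb w) ↔
    (∃ (w : List A) (qbar : Q), (fun q => w.foldl δ q) '' S = {qbar}) := by
  simp only [image_eq_singleton_iff_of_nonempty ⟨t, ht⟩]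
  constructor
  · rintro ⟨w, qbar, hw⟩
    refine ⟨VLetter.pendingCalls w, qbar, fun q hq => ?_⟩
    rw [← fromSubsetDVPDA_run_fst_of_mem δ t hq w, hw q]
  · rintro ⟨w, qbar, hw⟩
    refine ⟨.ret () :: w.map .call, qbar, fun q => ?_⟩
    calc ((fromSubsetDVPDA δ S t).run (q, []) (.ret () :: w.map .call)).1
        = w.foldl δ ((fromSubsetDVPDA δ S t).δr q () none) :=
          fromSubsetDVPDA_run_map_call_fst δ t w (_, [])
      _ = qbar := hw _ (fromSubsetDVPDA_δr_none_mem δ ht q ())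

/-- The DVPDA `M` constructed from a DFA `A = (Q, Σ, δ)`, `S ⊆ Q` and a
fixed `t ∈ S` has a synchronizing word in the arbitrary stack model iff there is a word
`w ∈ Σ*` synchronizing the subset `S` in `A`, i.e. with `|δ(S, w)| = 1`. -/
theorem fromSubsetDVPDA_syncArb_iff
    {Q A : Type} [Fintype Q] (δ : Q → A → Q) (S : Set Q) [DecidablePred (· ∈ S)]
    (t : Q) (ht : t ∈ S) :
    (∃ w : List (VLetter A Empty Unit), (fromSubsetDVPDA δ S t).SyncArb w) ↔
    (∃ (w : List A) (qbar : Q), (fun q => w.foldl δ q) '' S = {qbar}) :=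
  fromSubsetDVPDA_syncArb_iff_general δ S t ht
end

section
/- For every deterministic very visibly push-down automaton M, a word w ∈ Σ* synchronizes M in the arbitrary stack model if and only if w synchronizes M in the same stack model. -/
namespace DVPDA

variable {Q C I R Γ : Type} {M : DVPDA Q C I R Γ} {w : List (VLetter C I R)}

/-- The very visibly push-down automata (DVVPDA): the stack symbol pushed on a call letter is
determined by the letter alone. -/
def VeryVisibly (M : DVPDA Q C I R Γ) : Prop :=
  ∀ (σ : C) (p q : Q), (M.δc p σ).2 = (M.δc q σ).2

theorem VeryVisibly.snd_step_eq (hM : M.VeryVisibly) {c c' : Q × List Γ} (h : c.2 = c'.2)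
    (a : VLetter C I R) : (M.step c a).2 = (M.step c' a).2 := by
  obtain ⟨p, υ⟩ := c
  obtain ⟨q, υ'⟩ := c'
  obtain rfl : υ = υ' := h
  cases a with
  | call σ => exact congrArg (· :: υ) (hM σ p q)
  | int _ => rfl
  | ret _ => cases υ <;> rfl

theorem VeryVisibly.snd_run_eq (hM : M.VeryVisibly) {c c' : Q × List Γ} (h : c.2 = c'.2)
    (w : List (VLetter C I R)) : (M.run c w).2 = (M.run c' w).2 :=
  List.foldl_rel (r := fun c c' : Q × List Γ ↦ c.2 = c'.2) h fun a _ _ _ h ↦ hM.snd_step_eq h a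

theorem SyncSame.syncArb : M.SyncSame w → M.SyncArb w
  | ⟨qbar, _, h⟩ => ⟨qbar, fun q ↦ congrArg Prod.fst (h q)⟩

theorem VeryVisibly.syncSame_of_syncArb (hM : M.VeryVisibly) : M.SyncArb w → M.SyncSame w := by
  rintro ⟨qbar, h⟩
  have stack_eq (q : Q) : (M.run (q, []) w).2 = (M.run (qbar, []) w).2 := hM.snd_run_eq (by rfl) w
  exact ⟨qbar, (M.run (qbar, []) w).2, fun q ↦ Prod.ext (h q) (stack_eq q)⟩

end DVPDA

/-- For every deterministic very visibly push-down automaton `M`, a word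
`w` synchronizes `M` in the arbitrary stack model iff `w` synchronizes `M` in the same
stack model. -/
theorem dvvpda_syncArb_iff_syncSame
    {Q C I R Γ : Type} (M : DVPDA Q C I R Γ)
    (hvv : ∀ (σ : C) (p q : Q), (M.δc p σ).2 = (M.δc q σ).2)
    (w : List (VLetter C I R)) :
    M.SyncArb w ↔ M.SyncSame w :=
  have hM : M.VeryVisibly := hvv
  ⟨hM.syncSame_of_syncArb, DVPDA.SyncSame.syncArb⟩
end

section
/- Let M be a deterministic visibly push-down automaton. Then: (i) every 0-turn synchronizing word for M in the empty stack model contains no letter of Σ_call; and (ii) M has a 0-turn synchronizing word in the empty stack model if and only if the DFA A' = (Q, Σ_int ∪ Σ_ret, δ') has a synchronizing word, where δ'(q, σ) = δ_i(q, σ) for σ ∈ Σ_int and δ'(q, σ) = δ_r(q, σ, ⊥) for σ ∈ Σ_ret. -/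
/-- `AtMostStrokes h len m`: the height sequence `h 0, h 1, …, h len` can be split into at
most `m` strokes, i.e. there are breakpoints `0 = i₀ ≤ i₁ ≤ ⋯ ≤ i_m = len` such that on each
segment the heights are monotone non-decreasing (an upstroke) or monotone non-increasing
(a downstroke). -/
def AtMostStrokes (h : ℕ → ℕ) (len m : ℕ) : Prop :=
  ∃ br : Fin (m+1) → ℕ, br 0 = 0 ∧ br (Fin.last m) = len ∧ Monotone br ∧
    ∀ j : Fin m,
      (∀ a b : ℕ, br j.castSucc ≤ a → a ≤ b → b ≤ br j.succ → h a ≤ h b) ∨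
      (∀ a b : ℕ, br j.castSucc ≤ a → a ≤ b → b ≤ br j.succ → h b ≤ h a)

/-- Every run of `M` on `w` (started with empty stack) consists of at most `n+1` strokes,
i.e. it makes at most `n` turns. -/
def DVPDA.NTurnRun {Q C I R Γ : Type} (M : DVPDA Q C I R Γ) (n : ℕ)
    (w : List (VLetter C I R)) : Prop :=
  ∀ q : Q, AtMostStrokes (fun k => ((M.run (q, []) (w.take k)).2).length) w.length (n+1)

/-!
A run that starts and ends with the empty stack and consists of a single stroke has constant stack
height, so its stack is empty throughout. Reading a call letter would leave it nonempty. Conversely,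
on words without call letters the stack stays empty, and `M` moves through its states exactly as the
DFA `A'` does.
-/

theorem atMostStrokes_one_iff {h : ℕ → ℕ} {len : ℕ} :
    AtMostStrokes h len 1 ↔ MonotoneOn h (Set.Iic len) ∨ AntitoneOn h (Set.Iic len) := by
  constructor
  · rintro ⟨br, br_zero, br_last, -, hstroke⟩
    have br_one : br 1 = len := br_last
    refine (hstroke 0).imp (fun hup a _ b hb hab => ?_) (fun hdown a _ b hb hab => ?_)
    · exact hup a b (by simp [br_zero]) hab (by simpa [br_one] using hb)
    · exact hdown a b (by simp [br_zero]) hab (by simpa [br_one] using hb)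
  · intro hstroke
    refine ⟨![0, len], rfl, rfl, by simp [Fin.monotone_iff_le_succ], fun j => ?_⟩
    obtain rfl := Subsingleton.elim j 0
    exact hstroke.imp (fun hup a b _ hab hb => hup (hab.trans hb) hb hab)
      (fun hdown a b _ hab hb => hdown (hab.trans hb) hb hab)

theorem atMostStrokes_one_iff_of_eq {h : ℕ → ℕ} {len : ℕ} (h_ends : h 0 = h len) :
    AtMostStrokes h len 1 ↔ ∀ k ≤ len, h k = h 0 := by
  rw [atMostStrokes_one_iff]
  have zero_mem : 0 ∈ Set.Iic len := Nat.zero_le len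
  have len_mem : len ∈ Set.Iic len := le_refl len
  constructor
  · rintro (hup | hdown) k hk
    · exact le_antisymm ((hup hk len_mem hk).trans_eq h_ends.symm) (hup zero_mem hk k.zero_le)
    · exact le_antisymm (hdown zero_mem hk k.zero_le) (h_ends.trans_le (hdown hk len_mem hk))
  · intro hconst
    exact .inl fun a ha b hb _ => ((hconst a ha).trans (hconst b hb).symm).le

namespace VLetter

variable {C I R : Type}

/-- The inclusion of `Σ_int ∪ Σ_ret`, the alphabet of the DFA `A'`, into `Σ`. -/
def ofSum : I ⊕ R → VLetter C I R :=
  Sum.elim int ret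

theorem mem_range_ofSum_iff {l : VLetter C I R} :
    l ∈ Set.range (ofSum : I ⊕ R → VLetter C I R) ↔ ∀ c, l ≠ call c := by
  cases l <;> simp [ofSum]

theorem mem_range_map_ofSum_iff {w : List (VLetter C I R)} :
    w ∈ Set.range (List.map (ofSum : I ⊕ R → VLetter C I R)) ↔ ∀ l ∈ w, ∀ c, l ≠ call c := by
  simp only [Set.range_list_map, Set.mem_ofPred_eq, mem_range_ofSum_iff]

end VLetter

namespace DVPDA

open VLetter (ofSum)

variable {Q C I R Γ : Type} (M : DVPDA Q C I R Γ)

/-- The transition function `δ'` of the DFA `A'`: the state change of `M` on an internal or return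
letter when the stack is empty. -/
def bottomStep (q : Q) : I ⊕ R → Q :=
  Sum.elim (M.δi q) (M.δr q · none)

theorem step_nil_ofSum (q : Q) (l : I ⊕ R) : M.step (q, []) (ofSum l) = (M.bottomStep q l, []) := by
  cases l <;> rfl

theorem run_nil_map_ofSum (q : Q) (v : List (I ⊕ R)) :
    M.run (q, []) (v.map ofSum) = (v.foldl M.bottomStep q, []) := by
  rw [run, List.foldl_map]
  exact List.foldl_hom (fun p => (p, [])) fun p l => M.step_nil_ofSum p l

theorem run_append_call_snd_ne_nil (cfg : Q × List Γ) (u : List (VLetter C I R)) (c : C) :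
    (M.run cfg (u ++ [.call c])).2 ≠ [] := by
  simp [run, step]

theorem forall_run_take_snd_eq_nil_iff (q : Q) (w : List (VLetter C I R)) :
    (∀ k ≤ w.length, (M.run (q, []) (w.take k)).2 = []) ↔ w ∈ Set.range (List.map ofSum) := by
  constructor
  · intro hempty
    rw [VLetter.mem_range_map_ofSum_iff]
    rintro l hl c rfl
    obtain ⟨k, hk, hwk⟩ := List.getElem_of_mem hl
    have take_succ : w.take (k + 1) = w.take k ++ [.call c] := by
      rw [List.take_succ_eq_append_getElem hk, hwk]
    exact M.run_append_call_snd_ne_nil (q, []) (w.take k) c (take_succ ▸ hempty (k + 1) hk)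
  · rintro ⟨v, rfl⟩ k -
    rw [← List.map_take, run_nil_map_ofSum]

theorem atMostStrokes_one_run_iff {q : Q} {w : List (VLetter C I R)}
    (hend : (M.run (q, []) w).2 = []) :
    AtMostStrokes (fun k => (M.run (q, []) (w.take k)).2.length) w.length 1 ↔
      w ∈ Set.range (List.map ofSum) := by
  have hstart : (M.run (q, []) (w.take 0)).2 = [] := rfl
  rw [← M.forall_run_take_snd_eq_nil_iff q w,
    atMostStrokes_one_iff_of_eq (by rw [List.take_length, hend, hstart])]
  simp only [hstart, List.length_nil, List.length_eq_zero_iff]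

theorem syncEmpty_and_nTurnRun_zero_iff {w : List (VLetter C I R)} :
    M.SyncEmpty w ∧ M.NTurnRun 0 w ↔
      ∃ v : List (I ⊕ R), v.map ofSum = w ∧ ∃ qbar, ∀ q, v.foldl M.bottomStep q = qbar := by
  constructor
  · rintro ⟨⟨qbar, hsync⟩, hturn⟩
    obtain ⟨v, rfl⟩ := (M.atMostStrokes_one_run_iff (by rw [hsync])).mp (hturn qbar)
    refine ⟨v, rfl, qbar, fun q => ?_⟩
    simpa only [run_nil_map_ofSum, Prod.mk.injEq, and_true] using hsync q
  · rintro ⟨v, rfl, qbar, hsync⟩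
    refine ⟨⟨qbar, fun q => by rw [run_nil_map_ofSum, hsync]⟩, fun q => ?_⟩
    exact (M.atMostStrokes_one_run_iff (by rw [run_nil_map_ofSum])).mpr ⟨v, rfl⟩

end DVPDA

theorem dvpda_zero_turn_syncEmpty_general {Q C I R Γ : Type} (M : DVPDA Q C I R Γ) :
    (∀ w : List (VLetter C I R), M.SyncEmpty w → M.NTurnRun 0 w →
      ∀ l ∈ w, ∀ c : C, l ≠ VLetter.call c) ∧
    ((∃ w : List (VLetter C I R), M.SyncEmpty w ∧ M.NTurnRun 0 w) ↔
      (∃ (w : List (I ⊕ R)) (qbar : Q), ∀ q : Q, w.foldl M.bottomStep q = qbar)) := by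
  refine ⟨fun w hsync hturn => ?_, ?_⟩
  · obtain ⟨v, hvw, -⟩ := M.syncEmpty_and_nTurnRun_zero_iff.mp ⟨hsync, hturn⟩
    exact VLetter.mem_range_map_ofSum_iff.mp ⟨v, hvw⟩
  · simp only [DVPDA.syncEmpty_and_nTurnRun_zero_iff]
    exact ⟨fun ⟨_, v, _, hv⟩ => ⟨v, hv⟩, fun ⟨v, hv⟩ => ⟨_, v, rfl, hv⟩⟩

/-- For every DVPDA `M`: (i) every 0-turn synchronizing word for `M` in
the empty stack model contains no call letter; (ii) `M` has a 0-turn synchronizing word in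
the empty stack model iff the DFA `A' = (Q, Σ_int ∪ Σ_ret, δ')` has a synchronizing word,
where `δ'(q, σ) = δ_i(q, σ)` for `σ ∈ Σ_int` and `δ'(q, σ) = δ_r(q, σ, ⊥)` for
`σ ∈ Σ_ret`. -/
theorem dvpda_zero_turn_syncEmpty
    {Q C I R Γ : Type} [Fintype Q] (M : DVPDA Q C I R Γ) :
    (∀ w : List (VLetter C I R), M.SyncEmpty w → M.NTurnRun 0 w →
      ∀ l ∈ w, ∀ c : C, l ≠ VLetter.call c) ∧
    ((∃ w : List (VLetter C I R), M.SyncEmpty w ∧ M.NTurnRun 0 w) ↔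
      (∃ (w : List (I ⊕ R)) (qbar : Q), ∀ q : Q,
        w.foldl (fun p l => match l with
          | Sum.inl i => M.δi p i
          | Sum.inr ρ => M.δr p ρ none) q = qbar)) := by
  convert dvpda_zero_turn_syncEmpty_general M with _ _ _ p l
  cases l <;> rfl
end

section
/- For every deterministic visibly counter automaton M and every even n > 0: M has an n-turn synchronizing word in the empty stack model if and only if M has an (n−1)-turn synchronizing word in the empty stack model. -/
/-!
The stack is empty, hence of minimal height, at both ends of a run. Starting at the minimum, a
leading downstroke is flat and counts as an upstroke, and consecutive strokes in the same direction
merge, so a splitting into strokes may be taken to alternate up, down, up, … . With an odd number of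
at least three strokes the last one goes up; ending at the minimum, it is flat and is absorbed by
the downstroke before it.
-/

section Strokes

open Set

variable {α : Type*} [Preorder α] {h : ℕ → α} {down : Bool} {a b c m : ℕ}

/-- A stroke of the height sequence `h` between the times `a` and `b`: a downstroke if `down` is
`true`, an upstroke if it is `false`. A constant stretch is a stroke in both directions. -/
def IsStroke (h : ℕ → α) (down : Bool) (a b : ℕ) : Prop :=
  match down with
  | false => MonotoneOn h (Icc a b)
  | true => AntitoneOn h (Icc a b)

namespace IsStroke

theorem self (h : ℕ → α) (down : Bool) (a : ℕ) : IsStroke h down a a := by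
  cases down <;> simp [IsStroke]

theorem trans (hab : a ≤ b) (hbc : b ≤ c) (h₁ : IsStroke h down a b) (h₂ : IsStroke h down b c) :
    IsStroke h down a c := by
  cases down <;> unfold IsStroke at * <;> rw [← Icc_union_Icc_eq_Icc hab hbc]
  · exact h₁.union_right h₂ (isGreatest_Icc hab) (isLeast_Icc hbc)
  · exact h₁.union_right h₂ (isGreatest_Icc hab) (isLeast_Icc hbc)

theorem up_of_forall_le_left (hmin : ∀ k, h a ≤ h k) (hs : IsStroke h down a b) :
    IsStroke h false a b := by
  cases down with
  | false => exact hs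
  | true =>
    intro x hx y _ _
    exact (hs (left_mem_Icc.2 (hx.1.trans hx.2)) hx hx.1).trans (hmin y)

theorem down_of_forall_le_right (hmin : ∀ k, h b ≤ h k) (hs : IsStroke h down a b) :
    IsStroke h true a b := by
  cases down with
  | true => exact hs
  | false =>
    intro x _ y hy _
    exact (hs hy (right_mem_Icc.2 (hy.1.trans hy.2)) hy.2).trans (hmin x)

end IsStroke

theorem exists_isStroke_iff : (∃ down, IsStroke h down a b) ↔
    (∀ x y, a ≤ x → x ≤ y → y ≤ b → h x ≤ h y) ∨ (∀ x y, a ≤ x → x ≤ y → y ≤ b → h y ≤ h x) := by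
  simp only [Bool.exists_bool, IsStroke, MonotoneOn, AntitoneOn, mem_Icc]
  grind

/-- The height sequence `h 0, …, h b` splits into `m` strokes, possibly of length zero, that
alternate in direction, the first one being an upstroke. Counting strokes from `0`, the parity of
the index is the direction. -/
def AlternatingStrokes (h : ℕ → α) : ℕ → ℕ → Prop
  | b, 0 => b = 0
  | b, m + 1 => ∃ a ≤ b, AlternatingStrokes h a m ∧ IsStroke h m.bodd a b

namespace AlternatingStrokes

theorem succ (hb : AlternatingStrokes h b m) : AlternatingStrokes h b (m + 1) :=
  ⟨b, le_rfl, hb, IsStroke.self h _ b⟩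

theorem extend_last (ha : AlternatingStrokes h a (m + 1)) (hab : a ≤ b)
    (hs : IsStroke h m.bodd a b) : AlternatingStrokes h b (m + 1) :=
  let ⟨k, hka, hk, hlast⟩ := ha
  ⟨k, hka.trans hab, hk, hlast.trans hka hab hs⟩

theorem append (hmin : ∀ k, h 0 ≤ h k) (ha : AlternatingStrokes h a m) (hab : a ≤ b)
    (hs : IsStroke h down a b) : AlternatingStrokes h b (m + 1) := by
  cases m with
  | zero =>
    obtain rfl : a = 0 := ha
    exact ⟨0, hab, rfl, hs.up_of_forall_le_left hmin⟩
  | succ m =>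
    rcases Bool.eq_or_eq_not down m.bodd with rfl | rfl
    · exact (ha.extend_last hab hs).succ
    · exact ⟨a, hab, ha, by rwa [Nat.bodd_succ]⟩

theorem succ_iff_of_odd (hm : Odd m) (hmin : ∀ k, h b ≤ h k) :
    AlternatingStrokes h b (m + 2) ↔ AlternatingStrokes h b (m + 1) := by
  refine ⟨fun ⟨a, hab, ha, hs⟩ ↦ ha.extend_last hab ?_, succ⟩
  have hdown : m.bodd = true := by
    obtain ⟨k, rfl⟩ := hm
    simp [Nat.bodd_two]
  exact hdown ▸ hs.down_of_forall_le_right hmin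

end AlternatingStrokes

theorem atMostStrokes_zero {h : ℕ → ℕ} : AtMostStrokes h b 0 ↔ b = 0 := by
  constructor
  · rintro ⟨br, hfirst, hlast, -⟩
    exact hlast.symm.trans hfirst
  · rintro rfl
    exact ⟨0, rfl, rfl, monotone_const, fun j ↦ j.elim0⟩

theorem atMostStrokes_succ {h : ℕ → ℕ} : AtMostStrokes h b (m + 1) ↔
    ∃ a ≤ b, AtMostStrokes h a m ∧ ∃ down, IsStroke h down a b := by
  simp only [AtMostStrokes, ← exists_isStroke_iff]
  constructor
  · rintro ⟨br, hfirst, rfl, hmono, hstroke⟩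
    exact ⟨br (Fin.last m).castSucc, hmono (Fin.le_last _),
      ⟨fun j ↦ br j.castSucc, hfirst, rfl, hmono.comp Fin.strictMono_castSucc.monotone,
        fun j ↦ hstroke j.castSucc⟩, hstroke (Fin.last m)⟩
  · rintro ⟨a, hab, ⟨br, hfirst, rfl, hmono, hstroke⟩, hlast⟩
    refine ⟨Fin.snoc br b, ?first, Fin.snoc_last _ _, Fin.monotone_iff_le_succ.2 ?mono, ?stroke⟩
    case first => exact (Fin.snoc_castSucc (α := fun _ ↦ ℕ) b br 0).trans hfirst
    case mono =>
      simpa only [Fin.forall_fin_succ', Fin.succ_castSucc, Fin.succ_last, Fin.snoc_castSucc,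
        Fin.snoc_last] using ⟨Fin.monotone_iff_le_succ.1 hmono, hab⟩
    case stroke =>
      simpa only [Fin.forall_fin_succ', Fin.succ_castSucc, Fin.succ_last, Fin.snoc_castSucc,
        Fin.snoc_last] using ⟨hstroke, hlast⟩

theorem atMostStrokes_iff_alternatingStrokes {h : ℕ → ℕ} (hmin : ∀ k, h 0 ≤ h k) :
    AtMostStrokes h b m ↔ AlternatingStrokes h b m := by
  induction m generalizing b with
  | zero => exact atMostStrokes_zero
  | succ m ih =>
    rw [atMostStrokes_succ]
    constructor
    · rintro ⟨a, hab, ha, down, hs⟩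
      exact (ih.1 ha).append hmin hab hs
    · rintro ⟨a, hab, ha, hs⟩
      exact ⟨a, hab, ih.2 ha, _, hs⟩

end Strokes

theorem dvca_even_turn_syncEmpty_iff_pred_turn_general
    {Q C I R Γ : Type} (M : DVPDA Q C I R Γ) {w : List (VLetter C I R)}
    (hempty : ∀ q, (M.run (q, []) w).2 = []) {n : ℕ} (hn : 0 < n) (hev : Even n) :
    M.NTurnRun n w ↔ M.NTurnRun (n - 1) w := by
  obtain ⟨m, rfl⟩ := Nat.exists_eq_add_one.2 hn
  have hodd : Odd m := by simpa [Nat.even_add_one] using hev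
  refine forall_congr' fun q ↦ ?_
  have hstart : ((M.run (q, []) (w.take 0)).2).length = 0 := rfl
  have hend : ((M.run (q, []) (w.take w.length)).2).length = 0 := by
    rw [List.take_length, hempty, List.length_nil]
  rw [Nat.add_sub_cancel, atMostStrokes_iff_alternatingStrokes fun _ ↦ hstart ▸ Nat.zero_le _,
    atMostStrokes_iff_alternatingStrokes fun _ ↦ hstart ▸ Nat.zero_le _]
  exact AlternatingStrokes.succ_iff_of_odd hodd fun _ ↦ hend ▸ Nat.zero_le _

/-- For every deterministic visibly counter automaton `M` (a DVPDA with a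
single stack symbol besides `⊥`) and every even `n > 0`: `M` has an `n`-turn synchronizing
word in the empty stack model iff `M` has an `(n-1)`-turn synchronizing word in the empty
stack model.  (An `m`-turn run consists of at most `m+1` strokes.) -/
theorem dvca_even_turn_syncEmpty_iff_pred_turn
    {Q C I R : Type} [Fintype Q] (M : DVPDA Q C I R Unit)
    (n : ℕ) (hn : 0 < n) (hev : Even n) :
    (∃ w : List (VLetter C I R), M.SyncEmpty w ∧ M.NTurnRun n w) ↔
    (∃ w : List (VLetter C I R), M.SyncEmpty w ∧ M.NTurnRun (n - 1) w) := by
  exact exists_congr fun w ↦ and_congr_right fun ⟨_, hsync⟩ ↦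
    dvca_even_turn_syncEmpty_iff_pred_turn_general M (fun q ↦ congrArg Prod.snd (hsync q)) hn hev
end

section
/- Let M be a deterministic visibly push-down automaton with state set Q = {p_1, …, p_n}, and let M^n be the n-fold product automaton of M as described in the context, with start state (p_1, …, p_n) and final states {(q, q, …, q) : q ∈ Q}. Then M^n is a well-defined deterministic visibly push-down automaton, and the language accepted by M^n is exactly the set of words that synchronize M in the arbitrary stack model. -/
/-- The `n`-fold product of a DVPDA `M`: states are `n`-tuples of states of `M`, the stack
alphabet consists of `n`-tuples of stack symbols (with bottom symbol `(⊥, …, ⊥)`), and all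
transitions are performed componentwise. -/
def prodDVPDA {Q C I R Γ : Type} (M : DVPDA Q C I R Γ) (n : ℕ) :
    DVPDA (Fin n → Q) C I R (Fin n → Γ) where
  δc := fun qs σ => (fun j => (M.δc (qs j) σ).1, fun j => (M.δc (qs j) σ).2)
  δi := fun qs σ j => M.δi (qs j) σ
  δr := fun qs σ g => match g with
    | none => fun j => M.δr (qs j) σ none
    | some gs => fun j => M.δr (qs j) σ (some (gs j))

namespace DVPDA

variable {Q Q' C I R Γ Γ' : Type}

/-- A homomorphism of DVPDAs over the same visibly pushdown alphabet: a map of states and a map of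
stack symbols that commute with all transitions. The bottom symbol `none` is sent to itself, and
since the letter read decides between push and pop, corresponding runs keep equal stack heights. -/
structure Hom (M : DVPDA Q C I R Γ) (N : DVPDA Q' C I R Γ') where
  mapState : Q → Q'
  mapSymbol : Γ → Γ'
  map_δc : ∀ q c, N.δc (mapState q) c = Prod.map mapState mapSymbol (M.δc q c)
  map_δi : ∀ q i, N.δi (mapState q) i = mapState (M.δi q i)
  map_δr : ∀ q ρ γ, N.δr (mapState q) ρ (γ.map mapSymbol) = mapState (M.δr q ρ γ)

namespace Hom

variable {M : DVPDA Q C I R Γ} {N : DVPDA Q' C I R Γ'}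

/-- The action of a homomorphism on configurations, symbol by symbol on the stack. -/
def mapConfig (f : Hom M N) : Q × List Γ → Q' × List Γ' :=
  Prod.map f.mapState (List.map f.mapSymbol)

theorem step_mapConfig (f : Hom M N) (cfg : Q × List Γ) (a : VLetter C I R) :
    N.step (f.mapConfig cfg) a = f.mapConfig (M.step cfg a) := by
  obtain ⟨q, s⟩ := cfg
  cases a with
  | call c => simp [mapConfig, step, f.map_δc]
  | int i => simp [mapConfig, step, f.map_δi]
  | ret ρ =>
    cases s with
    | nil => simp [mapConfig, step, ← f.map_δr]
    | cons γ s => simp [mapConfig, step, ← f.map_δr]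

theorem run_mapConfig (f : Hom M N) (cfg : Q × List Γ) (w : List (VLetter C I R)) :
    N.run (f.mapConfig cfg) w = f.mapConfig (M.run cfg w) :=
  List.foldl_hom f.mapConfig f.step_mapConfig

end Hom

end DVPDA

section Product

variable {Q C I R Γ : Type} {n : ℕ}

/-- The projection of the `n`-fold product onto its `j`-th component, as a homomorphism. -/
def prodDVPDAProj (M : DVPDA Q C I R Γ) (j : Fin n) : DVPDA.Hom (prodDVPDA M n) M where
  mapState qs := qs j
  mapSymbol γs := γs j
  map_δc _ _ := rfl
  map_δi _ _ := rfl
  map_δr _ _ γ := by cases γ <;> rfl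

theorem prodDVPDA_run_fst_apply (M : DVPDA Q C I R Γ) (qs : Fin n → Q) (s : List (Fin n → Γ))
    (w : List (VLetter C I R)) (j : Fin n) :
    ((prodDVPDA M n).run (qs, s) w).1 j = (M.run (qs j, s.map (· j)) w).1 :=
  congrArg Prod.fst ((prodDVPDAProj M j).run_mapConfig (qs, s) w).symm

theorem prodDVPDA_run_fst_eq_const_iff (M : DVPDA Q C I R Γ) (qs : Fin n → Q)
    (s : List (Fin n → Γ)) (w : List (VLetter C I R)) (q : Q) :
    (((prodDVPDA M n).run (qs, s) w).1 = fun _ => q) ↔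
      ∀ j, (M.run (qs j, s.map (· j)) w).1 = q := by
  simp only [funext_iff, prodDVPDA_run_fst_apply]

theorem prodDVPDA_accepts_iff_syncArb_general (M : DVPDA Q C I R Γ) {p : Fin n → Q}
    (hp : Function.Surjective p) (w : List (VLetter C I R)) :
    (∃ q : Q, ((prodDVPDA M n).run (p, []) w).1 = fun _ => q) ↔ M.SyncArb w := by
  simp only [DVPDA.SyncArb, prodDVPDA_run_fst_eq_const_iff, List.map_nil, hp.forall]

end Product

/-- Let `M` be a DVPDA with state set `Q = {p_1, …, p_n}` (given by an
enumeration `e : Fin n ≃ Q`), and let `M^n` be the `n`-fold product DVPDA of `M`, with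
start state `(p_1, …, p_n)` and final states `{(q, …, q) : q ∈ Q}`.  Then the language
accepted by `M^n` is exactly the set of words synchronizing `M` in the arbitrary stack
model: a word `w` is accepted (its run from the start state with empty stack ends in a
diagonal state, with any stack content) iff `w` synchronizes `M` in the arbitrary stack
model.  (That `M^n` is a well-defined DVPDA is witnessed by the definition `prodDVPDA`.) -/
theorem prodDVPDA_accepts_iff_syncArb
    {Q C I R Γ : Type} [Fintype Q] (M : DVPDA Q C I R Γ)
    (n : ℕ) (e : Fin n ≃ Q) (w : List (VLetter C I R)) :
    (∃ qbar : Q,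
      ((prodDVPDA M n).run ((fun j => e j), []) w).1 = fun _ => qbar) ↔
    M.SyncArb w :=
  prodDVPDA_accepts_iff_syncArb_general M e.surjective w
end

section
/- Let M be a deterministic visibly push-down automaton with state set Q = {p_1, …, p_n}, and let M^n_same be the automaton obtained from the n-fold product M^n by adding the states q_check, q_fin, q_fail and a new return letter r as described in the context, with start state (p_1, …, p_n) and single final state q_fin. Then M^n_same is a deterministic visibly push-down automaton, and its accepted language is nonempty if and only if M has a synchronizing word in the same stack model. -/
/-- The states of `M^n_same`: the product states together with the three additional states
`q_check`, `q_fin` and `q_fail`. -/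
inductive ExtState (X : Type) : Type
  | base  : X → ExtState X
  | check : ExtState X
  | fin   : ExtState X
  | fail  : ExtState X

open Classical in
/-- The DVPDA `M^n_same` obtained from the `n`-fold product `M^n` by adding the states
`q_check`, `q_fin`, `q_fail` and a new return letter `r` (the letter `Sum.inr ()`): from a
product state `(q_1, …, q_n)` with non-bottom top-of-stack `(γ_1, …, γ_n)`, the letter `r`
leads to `q_check` if all `q_i` are equal and all `γ_i` are equal, and to `q_fail`
otherwise; with bottom `⊥` on top, `r` leads to `q_fin` if all `q_i` are equal and to
`q_fail` otherwise; from `q_check`, `r` pops and stays in `q_check` if the top-of-stack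
tuple has all entries equal (and is not the bottom symbol), leads to `q_fin` on the bottom
symbol, and to `q_fail` otherwise; `q_check` moves to `q_fail` on every other input letter;
`q_fail` is a (non-accepting) trap state and `q_fin` an (accepting) trap state. -/
noncomputable def prodSameDVPDA {Q C I R Γ : Type} [Inhabited Γ]
    (M : DVPDA Q C I R Γ) (n : ℕ) :
    DVPDA (ExtState (Fin n → Q)) C I (R ⊕ Unit) (Fin n → Γ) where
  δc := fun s σ => match s with
    | .base qs => (.base (fun j => (M.δc (qs j) σ).1), fun j => (M.δc (qs j) σ).2)
    | .check => (.fail, fun _ => default)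
    | .fin => (.fin, fun _ => default)
    | .fail => (.fail, fun _ => default)
  δi := fun s σ => match s with
    | .base qs => .base (fun j => M.δi (qs j) σ)
    | .check => .fail
    | .fin => .fin
    | .fail => .fail
  δr := fun s ρ g => match s, ρ with
    | .base qs, Sum.inl r => (match g with
        | none => .base (fun j => M.δr (qs j) r none)
        | some gs => .base (fun j => M.δr (qs j) r (some (gs j))))
    | .base qs, Sum.inr _ => (match g with
        | none => if ∀ i j, qs i = qs j then .fin else .fail
        | some gs =>
            if (∀ i j, qs i = qs j) ∧ (∀ i j, gs i = gs j) then .check else .fail)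
    | .check, Sum.inr _ => (match g with
        | none => .fin
        | some gs => if ∀ i j, gs i = gs j then .check else .fail)
    | .check, Sum.inl _ => .fail
    | .fin, _ => .fin
    | .fail, _ => .fail

/-!
Call a configuration of `M^n` diagonal if its `n` components are the same configuration of `M`.
The letter `r` starts a destructive test of diagonality: it compares the states, and its repetitions
compare the entries of one stack tuple each, down to the bottom symbol. Any other letter read during
the test leads to the trap `q_fail`, so `q_fin` is reachable through the test exactly from the
diagonal configurations. Before the first `r`, `M^n_same` simulates `M^n`, whose components are
independent runs of `M`. Hence an accepting run exists iff `M^n` reaches a diagonal configuration,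
that is, iff some word leads all components to the same state with the same stack.
-/

theorem forall_forall_eq_iff_exists_forall_eq {ι α : Sort*} [Nonempty α] (f : ι → α) :
    (∀ i j, f i = f j) ↔ ∃ a, ∀ i, f i = a := by
  refine ⟨fun h => ?_, fun ⟨_, ha⟩ i j => (ha i).trans (ha j).symm⟩
  rcases isEmpty_or_nonempty ι with _ | ⟨⟨i₀⟩⟩
  · exact ⟨Classical.arbitrary α, isEmptyElim⟩
  · exact ⟨f i₀, fun i => h i i₀⟩

namespace VLetter

variable {C I R S : Type}

/-- The translation of letters induced by a map of return letters. It embeds the alphabet of `M`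
into that of `M^n_same`. -/
def mapRet (f : R → S) : VLetter C I R → VLetter C I S
  | call c => call c
  | int i => int i
  | ret ρ => ret (f ρ)

theorem eq_mapRet_inl_or_eq_ret_inr (a : VLetter C I (R ⊕ S)) :
    (∃ b : VLetter C I R, a = b.mapRet Sum.inl) ∨ ∃ s, a = ret (Sum.inr s) := by
  rcases a with c | i | ρ | s
  · exact Or.inl ⟨call c, rfl⟩
  · exact Or.inl ⟨int i, rfl⟩
  · exact Or.inl ⟨ret ρ, rfl⟩
  · exact Or.inr ⟨s, rfl⟩

end VLetter

namespace DVPDA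

variable {Q C I R Γ : Type} {M : DVPDA Q C I R Γ} {cfg : Q × List Γ} {q : Q}

/-- Some run from the configuration `cfg` ends in the state `q`, whatever its final stack. For a
start configuration `cfg` and a single final state `q`, this is nonemptiness of the accepted
language. -/
def Reaches (M : DVPDA Q C I R Γ) (cfg : Q × List Γ) (q : Q) : Prop :=
  ∃ w, (M.run cfg w).1 = q

theorem Reaches.of_run {w : List (VLetter C I R)} (h : M.Reaches (M.run cfg w) q) :
    M.Reaches cfg q := by
  obtain ⟨v, hv⟩ := h
  refine ⟨w ++ v, ?_⟩
  rwa [run, List.foldl_append]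

theorem Reaches.of_step {a : VLetter C I R} (h : M.Reaches (M.step cfg a) q) : M.Reaches cfg q :=
  Reaches.of_run (w := [a]) h

theorem Reaches.exists_step (h : M.Reaches cfg q) (hne : cfg.1 ≠ q) :
    ∃ a, M.Reaches (M.step cfg a) q := by
  obtain ⟨_ | ⟨a, w⟩, hw⟩ := h
  · exact absurd hw hne
  · exact ⟨a, w, hw⟩

theorem run_fst_eq_of_trap (htrap : ∀ s a, (M.step (q, s) a).1 = q) (s : List Γ)
    (w : List (VLetter C I R)) : (M.run (q, s) w).1 = q := by
  induction w generalizing s with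
  | nil => rfl
  | cons a w ih =>
    have hstep : M.step (q, s) a = (q, (M.step (q, s) a).2) := Prod.ext (htrap s a) rfl
    change (M.run (M.step (q, s) a) w).1 = q
    rw [hstep]
    exact ih _

end DVPDA

section Product

variable {Q C I R Γ : Type} {n : ℕ}

/-- The `j`-th component of a configuration of the `n`-fold product. -/
def projConfig (j : Fin n) (cfg : (Fin n → Q) × List (Fin n → Γ)) : Q × List Γ :=
  (cfg.1 j, cfg.2.map fun g => g j)

theorem projConfig_step_prodDVPDA (M : DVPDA Q C I R Γ) (j : Fin n)
    (cfg : (Fin n → Q) × List (Fin n → Γ)) (a : VLetter C I R) :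
    projConfig j ((prodDVPDA M n).step cfg a) = M.step (projConfig j cfg) a := by
  obtain ⟨qs, _ | ⟨g, s⟩⟩ := cfg <;> cases a <;> rfl

theorem projConfig_run_prodDVPDA (M : DVPDA Q C I R Γ) (j : Fin n)
    (cfg : (Fin n → Q) × List (Fin n → Γ)) (w : List (VLetter C I R)) :
    projConfig j ((prodDVPDA M n).run cfg w) = M.run (projConfig j cfg) w :=
  (List.foldl_hom _ fun cfg a => (projConfig_step_prodDVPDA M j cfg a).symm).symm

/-- A configuration of the `n`-fold product is diagonal if all its components are the same
configuration. This is the property which the letter `r` of `M^n_same` tests. -/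
def IsDiagonal (cfg : (Fin n → Q) × List (Fin n → Γ)) : Prop :=
  ∀ i j, projConfig i cfg = projConfig j cfg

theorem isDiagonal_mk_iff (qs : Fin n → Q) (s : List (Fin n → Γ)) :
    IsDiagonal (qs, s) ↔ (∀ i j, qs i = qs j) ∧ ∀ g ∈ s, ∀ i j, g i = g j := by
  simp only [IsDiagonal, projConfig, Prod.mk.injEq, List.map_inj_left, forall_and]
  exact and_congr_right fun _ =>
    ⟨fun h g hg i j => h i j g hg, fun h i j g hg => h g hg i j⟩

theorem isDiagonal_run_prodDVPDA_iff (M : DVPDA Q C I R Γ)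
    (cfg : (Fin n → Q) × List (Fin n → Γ)) (w : List (VLetter C I R)) :
    IsDiagonal ((prodDVPDA M n).run cfg w) ↔
      ∀ i j, M.run (projConfig i cfg) w = M.run (projConfig j cfg) w := by
  simp only [IsDiagonal, projConfig_run_prodDVPDA]

end Product

namespace prodSameDVPDA

variable {Q C I R Γ : Type} {n : ℕ}

/-- The embedding of the configurations of `M^n` into those of `M^n_same`. -/
def baseConfig : (Fin n → Q) × List (Fin n → Γ) → ExtState (Fin n → Q) × List (Fin n → Γ) :=
  Prod.map ExtState.base id

variable [Inhabited Γ] (M : DVPDA Q C I R Γ)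

theorem step_baseConfig (cfg : (Fin n → Q) × List (Fin n → Γ))
    (a : VLetter C I R) :
    (prodSameDVPDA M n).step (baseConfig cfg) (a.mapRet Sum.inl) =
      baseConfig ((prodDVPDA M n).step cfg a) := by
  obtain ⟨qs, _ | ⟨g, s⟩⟩ := cfg <;> cases a <;> rfl

theorem run_baseConfig (cfg : (Fin n → Q) × List (Fin n → Γ))
    (w : List (VLetter C I R)) :
    (prodSameDVPDA M n).run (baseConfig cfg) (w.map (VLetter.mapRet Sum.inl)) =
      baseConfig ((prodDVPDA M n).run cfg w) := by
  rw [DVPDA.run, List.foldl_map]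
  exact List.foldl_hom _ (step_baseConfig M)

theorem not_reaches_fin_fail (s : List (Fin n → Γ)) :
    ¬ (prodSameDVPDA M n).Reaches (ExtState.fail, s) ExtState.fin := by
  have htrap (s : List (Fin n → Γ)) (a : VLetter C I (R ⊕ Unit)) :
      ((prodSameDVPDA M n).step (ExtState.fail, s) a).1 = ExtState.fail := by
    cases s <;> cases a <;> rfl
  rintro ⟨w, hw⟩
  rw [DVPDA.run_fst_eq_of_trap htrap] at hw
  cases hw

theorem reaches_fin_ite_fail_iff {P : Prop} {_ : Decidable P} {x : ExtState (Fin n → Q)}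
    (s : List (Fin n → Γ)) :
    (prodSameDVPDA M n).Reaches (if P then x else ExtState.fail, s) ExtState.fin ↔
      P ∧ (prodSameDVPDA M n).Reaches (x, s) ExtState.fin := by
  by_cases hP : P
  · rw [if_pos hP, and_iff_right hP]
  · rw [if_neg hP]
    exact iff_of_false (not_reaches_fin_fail M s) fun h => hP h.1

theorem reaches_fin_check_iff_step (s : List (Fin n → Γ)) :
    (prodSameDVPDA M n).Reaches (ExtState.check, s) ExtState.fin ↔
      (prodSameDVPDA M n).Reaches
        ((prodSameDVPDA M n).step (ExtState.check, s) (.ret (.inr ()))) ExtState.fin := by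
  refine ⟨fun h => ?_, DVPDA.Reaches.of_step⟩
  obtain ⟨a, ha⟩ := h.exists_step nofun
  obtain ⟨b, rfl⟩ | ⟨_, rfl⟩ := a.eq_mapRet_inl_or_eq_ret_inr
  · cases s <;> cases b <;> exact absurd ha (not_reaches_fin_fail M _)
  · exact ha

theorem reaches_fin_check_iff (s : List (Fin n → Γ)) :
    (prodSameDVPDA M n).Reaches (ExtState.check, s) ExtState.fin ↔
      ∀ g ∈ s, ∀ i j, g i = g j := by
  induction s with
  | nil =>
    rw [reaches_fin_check_iff_step]
    exact iff_of_true ⟨[], rfl⟩ (List.forall_mem_nil _)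
  | cons g s ih =>
    rw [reaches_fin_check_iff_step, List.forall_mem_cons, ← ih]
    exact reaches_fin_ite_fail_iff M s

theorem reaches_fin_step_baseConfig_iff_isDiagonal (cfg : (Fin n → Q) × List (Fin n → Γ)) :
    (prodSameDVPDA M n).Reaches
        ((prodSameDVPDA M n).step (baseConfig cfg) (.ret (.inr ()))) ExtState.fin ↔
      IsDiagonal cfg := by
  obtain ⟨qs, _ | ⟨g, s⟩⟩ := cfg
  · rw [isDiagonal_mk_iff, and_iff_left (List.forall_mem_nil _)]
    exact (reaches_fin_ite_fail_iff M []).trans (and_iff_left ⟨[], rfl⟩)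
  · rw [isDiagonal_mk_iff, List.forall_mem_cons, ← and_assoc, ← reaches_fin_check_iff M]
    exact reaches_fin_ite_fail_iff M s

theorem reaches_fin_baseConfig_iff_exists_isDiagonal (cfg : (Fin n → Q) × List (Fin n → Γ)) :
    (prodSameDVPDA M n).Reaches (baseConfig cfg) ExtState.fin ↔
      ∃ w, IsDiagonal ((prodDVPDA M n).run cfg w) := by
  constructor
  · rintro ⟨w, hw⟩
    induction w generalizing cfg with
    | nil => cases hw
    | cons a w ih =>
      obtain ⟨b, rfl⟩ | ⟨_, rfl⟩ := a.eq_mapRet_inl_or_eq_ret_inr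
      · obtain ⟨v, hv⟩ := ih ((prodDVPDA M n).step cfg b)
          (step_baseConfig M cfg b ▸ hw)
        exact ⟨b :: v, hv⟩
      · exact ⟨[], (reaches_fin_step_baseConfig_iff_isDiagonal M cfg).1 ⟨w, hw⟩⟩
  · rintro ⟨w, hw⟩
    have htest := (reaches_fin_step_baseConfig_iff_isDiagonal M _).2 hw
    rw [← run_baseConfig] at htest
    exact htest.of_step.of_run

end prodSameDVPDA

theorem prodSameDVPDA_language_nonempty_iff_syncSame_general
    {Q C I R Γ : Type} [Nonempty Q] [Inhabited Γ] (M : DVPDA Q C I R Γ)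
    {n : ℕ} (p : Fin n → Q) :
    (∃ w : List (VLetter C I (R ⊕ Unit)),
      ((prodSameDVPDA M n).run (ExtState.base p, []) w).1 = ExtState.fin) ↔
    ∃ (w : List (VLetter C I R)) (qbar : Q) (υ : List Γ), ∀ j, M.run (p j, []) w = (qbar, υ) := by
  calc (∃ w, ((prodSameDVPDA M n).run (ExtState.base p, []) w).1 = ExtState.fin)
    _ ↔ ∃ w, IsDiagonal ((prodDVPDA M n).run (p, []) w) :=
      prodSameDVPDA.reaches_fin_baseConfig_iff_exists_isDiagonal M (p, [])
    _ ↔ ∃ w, ∀ i j, M.run (p i, []) w = M.run (p j, []) w :=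
      exists_congr fun w => isDiagonal_run_prodDVPDA_iff M (p, []) w
    _ ↔ ∃ w, ∃ c, ∀ j, M.run (p j, []) w = c :=
      exists_congr fun w => forall_forall_eq_iff_exists_forall_eq _
    _ ↔ ∃ w qbar υ, ∀ j, M.run (p j, []) w = (qbar, υ) := by
      simp only [Prod.exists]

/-- Let `M` be a DVPDA with state set `Q = {p_1, …, p_n}` (given by an
enumeration `e : Fin n ≃ Q`), and let `M^n_same` be the DVPDA obtained from the `n`-fold
product `M^n` by adding `q_check`, `q_fin`, `q_fail` and a new return letter `r`, with
start state `(p_1, …, p_n)` and single final state `q_fin`.  Then the language accepted by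
`M^n_same` is nonempty iff `M` has a synchronizing word in the same stack model.  (That
`M^n_same` is a well-defined DVPDA is witnessed by the definition `prodSameDVPDA`.) -/
theorem prodSameDVPDA_language_nonempty_iff_syncSame
    {Q C I R Γ : Type} [Fintype Q] [Nonempty Q] [Inhabited Γ] (M : DVPDA Q C I R Γ)
    (n : ℕ) (e : Fin n ≃ Q) :
    (∃ w : List (VLetter C I (R ⊕ Unit)),
      ((prodSameDVPDA M n).run (ExtState.base (fun j => e j), []) w).1 =
        ExtState.fin) ↔
    (∃ w : List (VLetter C I R), M.SyncSame w) := by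
  rw [prodSameDVPDA_language_nonempty_iff_syncSame_general M fun j => e j]
  simp only [DVPDA.SyncSame, ← e.forall_congr_right (q := fun q => M.run (q, []) _ = _)]
end

section
/- Let M be a deterministic visibly push-down automaton with Σ_ret = ∅, and let T_M = (Q, Σ_call ∪ Σ_int, Γ\{⊥}, δ_T) be the sequential transducer with δ_T(q, σ) = (q', γ) whenever δ_c(q, σ) = (q', γ) for σ ∈ Σ_call (the pushed symbol output as a length-one word) and δ_T(q, σ) = (δ_i(q, σ), ε) for σ ∈ Σ_int. Then T_M is a visibly sequential transducer, and a word w synchronizes M in the same stack model if and only if w trace-synchronizes T_M. -/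
/-- One step of a sequential transducer with transition function `δ : Q → A → Q × Γ*`:
the new state is composed and the produced output is appended. -/
def tStep {Q A Γ : Type} (δ : Q → A → Q × List Γ) : Q × List Γ → A → Q × List Γ :=
  fun s a => ((δ s.1 a).1, s.2 ++ (δ s.1 a).2)

/-- The run of a sequential transducer on an input word, from state `q`: the final state
together with the concatenated output word. -/
def tRun {Q A Γ : Type} (δ : Q → A → Q × List Γ) (q : Q) (w : List A) : Q × List Γ :=
  w.foldl (tStep δ) (q, [])

/-- `w` trace-synchronizes the sequential transducer `δ`: from all states the runs on `w`
end in the same state and produce the same output word. -/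
def TraceSync {Q A Γ : Type} (δ : Q → A → Q × List Γ) (w : List A) : Prop :=
  ∀ p q : Q, tRun δ p w = tRun δ q w

/-- The sequential transducer `T_M` associated with a DVPDA `M` without return letters:
a call letter `σ` outputs the pushed stack symbol as a length-one word, and an internal
letter outputs the empty word. -/
def transducerOf {Q C I Γ : Type} (M : DVPDA Q C I Empty Γ) :
    Q → VLetter C I Empty → Q × List Γ
  | q, .call c => ((M.δc q c).1, [(M.δc q c).2])
  | q, .int i  => (M.δi q i, [])
  | _, .ret e  => e.elim

theorem length_transducerOf_output_eq {Q C I Γ : Type} (M : DVPDA Q C I Empty Γ)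
    (σ : VLetter C I Empty) (p q : Q) :
    (transducerOf M p σ).2.length = (transducerOf M q σ).2.length := by
  cases σ with
  | call c => rfl
  | int i => rfl
  | ret e => exact e.elim

namespace DVPDA

theorem syncSame_iff_forall_run_eq {Q C I R Γ : Type} [Nonempty Q] (M : DVPDA Q C I R Γ)
    (w : List (VLetter C I R)) :
    M.SyncSame w ↔ ∀ p q : Q, M.run (p, []) w = M.run (q, []) w := by
  constructor
  · rintro ⟨qbar, υ, run_eq⟩ p q
    exact (run_eq p).trans (run_eq q).symm
  · intro run_eq
    obtain ⟨q₀⟩ := ‹Nonempty Q›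
    exact ⟨_, _, fun q => run_eq q q₀⟩

variable {Q C I Γ : Type}

/-- The stack grows at the head of the list and the output word at its end, so `M` and `T_M`
simulate each other once one of the two lists is reversed. -/
theorem step_map_reverse (M : DVPDA Q C I Empty Γ) (cfg : Q × List Γ) (σ : VLetter C I Empty) :
    M.step (cfg.map id List.reverse) σ =
      (tStep (transducerOf M) cfg σ).map id List.reverse := by
  cases σ with
  | call c => simp [step, tStep, transducerOf]
  | int i => simp [step, tStep, transducerOf]
  | ret e => exact e.elim

theorem run_nil_eq_map_reverse_tRun (M : DVPDA Q C I Empty Γ) (q : Q)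
    (w : List (VLetter C I Empty)) :
    M.run (q, []) w = (tRun (transducerOf M) q w).map id List.reverse :=
  List.foldl_hom (Prod.map id List.reverse) M.step_map_reverse (l := w) (init := (q, []))

theorem run_nil_eq_iff_tRun_eq (M : DVPDA Q C I Empty Γ) (p q : Q)
    (w : List (VLetter C I Empty)) :
    M.run (p, []) w = M.run (q, []) w ↔
      tRun (transducerOf M) p w = tRun (transducerOf M) q w := by
  rw [run_nil_eq_map_reverse_tRun, run_nil_eq_map_reverse_tRun]
  exact (Function.injective_id.prodMap List.reverse_injective).eq_iff

theorem syncSame_iff_traceSync [Nonempty Q] (M : DVPDA Q C I Empty Γ)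
    (w : List (VLetter C I Empty)) : M.SyncSame w ↔ TraceSync (transducerOf M) w := by
  simp only [syncSame_iff_forall_run_eq, run_nil_eq_iff_tRun_eq, TraceSync]

end DVPDA

theorem dvpda_no_ret_syncSame_iff_traceSync_general
    {Q C I Γ : Type} [Nonempty Q] (M : DVPDA Q C I Empty Γ) :
    (∀ (σ : VLetter C I Empty) (p q : Q),
      ((transducerOf M) p σ).2.length = ((transducerOf M) q σ).2.length) ∧
    (∀ w : List (VLetter C I Empty),
      M.SyncSame w ↔ TraceSync (transducerOf M) w) :=
  ⟨length_transducerOf_output_eq M, M.syncSame_iff_traceSync⟩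

/-- Let `M` be a DVPDA with `Σ_ret = ∅` and let
`T_M = (Q, Σ_call ∪ Σ_int, Γ∖{⊥}, δ_T)` be the associated sequential transducer.  Then
`T_M` is a visibly sequential transducer (output lengths do not depend on the state), and a
word `w` synchronizes `M` in the same stack model iff `w` trace-synchronizes `T_M`. -/
theorem dvpda_no_ret_syncSame_iff_traceSync
    {Q C I Γ : Type} [Fintype Q] [Nonempty Q] (M : DVPDA Q C I Empty Γ) :
    (∀ (σ : VLetter C I Empty) (p q : Q),
      ((transducerOf M) p σ).2.length = ((transducerOf M) q σ).2.length) ∧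
    (∀ w : List (VLetter C I Empty),
      M.SyncSame w ↔ TraceSync (transducerOf M) w) :=
  dvpda_no_ret_syncSame_iff_traceSync_general M
end
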